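/- arXiv:1810.02793 — 7 statements merged into one kernel-verified Lean document; each statement's English description precedes it below -/
import Mathlib

section
/- Let E be a nonzero finite-dimensional real normed vector space equipped with a bilinear multiplication m : E × E → E and a two-sided unit e ∈ E (i.e. m(e,x) = x = m(x,e) for all x) such that the norm is multiplicative: ‖m(x,y)‖ = ‖x‖·‖y‖ for all x, y ∈ E. Then the real dimension of E is 1, 2, 4, or 8. -/
/-!
In finite dimension, left multiplication by a unit vector is a linear isometry, so it preserves
the Hausdorff measure and the unit ball. Hence for a nonzero functional `f` the quadratic form
`x ↦ ∫ f(x z)²`, integrated over `z` in the unit ball, is a positive multiple of `‖x‖²`, and the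
norm comes from an inner product.

Polarizing the multiplicativity of the norm then gives the Cayley–Dickson formulas: a unital
subalgebra `B` and a nonzero `j ∈ Bᗮ` span a subalgebra `B ⊕ Bj` of twice the dimension, and
multiplicativity on it forces `B` to be associative. Doubling `ℝe` repeatedly gives dimensions
1, 2, 4, 8. If the algebra of dimension 8 were proper, it would be associative, so the one of
dimension 4 would be commutative, so conjugation would be trivial on the one of dimension 2,
where it negates the orthogonal complement of `e`.
-/

open MeasureTheory Metric Module
open scoped InnerProductSpace

section Parallelogram

variable {E F : Type*} [NormedAddCommGroup E] [NormedSpace ℝ E]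
  [NormedAddCommGroup F] [NormedSpace ℝ F]

section SecondMoment

variable [MeasurableSpace F] [BorelSpace F]

/-- The second moment of a functional `f` over the unit ball. The Hausdorff measure is the
normalization of Haar measure that is invariant under linear isometries by construction. -/
noncomputable def secondMoment (f : Dual ℝ F) : ℝ :=
  ∫ z in closedBall 0 1, f z ^ 2 ∂μH[finrank ℝ F]

lemma secondMoment_smul (c : ℝ) (f : Dual ℝ F) :
    secondMoment (c • f) = c ^ 2 * secondMoment f := by
  simp only [secondMoment, LinearMap.smul_apply, smul_eq_mul, mul_pow, integral_const_mul]

lemma secondMoment_comp_linearIsometryEquiv (f : Dual ℝ F) (T : F ≃ₗᵢ[ℝ] F) :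
    secondMoment (f ∘ₗ (T : F →ₗ[ℝ] F)) = secondMoment f := by
  have h := (T.toIsometryEquiv.measurePreserving_hausdorffMeasure
    (finrank ℝ F)).setIntegral_preimage_emb T.toHomeomorph.measurableEmbedding
    (fun z => f z ^ 2) (closedBall 0 1)
  simpa [secondMoment] using h

variable [FiniteDimensional ℝ F]

lemma integrableOn_sq_closedBall {μ : Measure F} [IsFiniteMeasureOnCompacts μ] (f : Dual ℝ F)
    {x : F} {r : ℝ} : IntegrableOn (fun z => f z ^ 2) (closedBall x r) μ :=
  (f.continuous_of_finiteDimensional.pow 2).continuousOn.integrableOn_compact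
    (isCompact_closedBall x r)

lemma secondMoment_add_add_secondMoment_sub (f g : Dual ℝ F) :
    secondMoment (f + g) + secondMoment (f - g) = 2 * (secondMoment f + secondMoment g) := by
  simp only [secondMoment]
  rw [← integral_add (integrableOn_sq_closedBall _) (integrableOn_sq_closedBall _),
    ← integral_add (integrableOn_sq_closedBall _) (integrableOn_sq_closedBall _),
    ← integral_const_mul]
  congr with z
  simp only [LinearMap.add_apply, LinearMap.sub_apply]
  ring

lemma secondMoment_pos {f : Dual ℝ F} (hf : f ≠ 0) : 0 < secondMoment f := by
  have hsupp : Function.support (fun z => f z ^ 2) ∩ closedBall 0 1 =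
      closedBall 0 1 \ (LinearMap.ker f : Set F) := by
    ext z
    simp [and_comm]
  have hker : μH[finrank ℝ F] (LinearMap.ker f : Set F) = 0 :=
    Measure.addHaar_submodule _ _ (mt LinearMap.ker_eq_top.1 hf)
  refine (setIntegral_pos_iff_support_of_nonneg_ae (ae_of_all _ fun z => sq_nonneg (f z))
    (integrableOn_sq_closedBall f)).2 ?_
  rw [hsupp, measure_sdiff_null hker]
  exact measure_closedBall_pos _ 0 one_pos

lemma secondMoment_comp_of_norm_eq_mul (f : Dual ℝ F) {T : F →ₗ[ℝ] F} {c : ℝ}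
    (hT : ∀ z, ‖T z‖ = |c| * ‖z‖) : secondMoment (f ∘ₗ T) = c ^ 2 * secondMoment f := by
  rcases eq_or_ne c 0 with rfl | hc
  · have hT0 : T = 0 := LinearMap.ext fun z => norm_eq_zero.1 (by simpa using hT z)
    simp [hT0, secondMoment]
  · let U : F →ₗᵢ[ℝ] F :=
      ⟨c⁻¹ • T, fun z => by simp [norm_smul, hT, abs_ne_zero.2 hc]⟩
    have hTU : T = c • (U.toLinearIsometryEquiv rfl : F →ₗ[ℝ] F) := by
      ext z
      simp [U, hc]
    rw [hTU, LinearMap.comp_smul, secondMoment_smul, secondMoment_comp_linearIsometryEquiv]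

end SecondMoment

theorem parallelogram_law_of_norm_map₂_eq_mul [FiniteDimensional ℝ F] [Nontrivial F]
    (m : E →ₗ[ℝ] F →ₗ[ℝ] F) (hm : ∀ x z, ‖m x z‖ = ‖x‖ * ‖z‖) (x y : E) :
    ‖x + y‖ * ‖x + y‖ + ‖x - y‖ * ‖x - y‖ = 2 * (‖x‖ * ‖x‖ + ‖y‖ * ‖y‖) := by
  borelize F
  obtain ⟨f, hf⟩ := exists_ne (0 : Dual ℝ F)
  have hQ (x : E) : secondMoment (f ∘ₗ m x) = ‖x‖ ^ 2 * secondMoment f :=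
    secondMoment_comp_of_norm_eq_mul f (by simpa using hm x)
  have hpar := secondMoment_add_add_secondMoment_sub (f ∘ₗ m x) (f ∘ₗ m y)
  rw [← LinearMap.comp_add, ← LinearMap.comp_sub, ← map_add, ← map_sub] at hpar
  simp only [hQ] at hpar
  refine mul_right_cancel₀ (secondMoment_pos hf).ne' ?_
  linarith

end Parallelogram

/-- `m` makes the inner product space `E` a composition algebra with unit `e`: a not necessarily
associative unital algebra whose norm is multiplicative. The condition `‖e‖ = 1` excludes the zero
algebra. -/
structure IsCompositionAlgebra {E : Type*} [NormedAddCommGroup E] [InnerProductSpace ℝ E]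
    (m : E →ₗ[ℝ] E →ₗ[ℝ] E) (e : E) : Prop where
  one_mul : ∀ x, m e x = x
  mul_one : ∀ x, m x e = x
  norm_mul : ∀ x y, ‖m x y‖ = ‖x‖ * ‖y‖
  norm_one : ‖e‖ = 1

namespace IsCompositionAlgebra

variable {E : Type*} [NormedAddCommGroup E] [InnerProductSpace ℝ E]
  {m : E →ₗ[ℝ] E →ₗ[ℝ] E} {e : E}

local infix:70 " ⋆ " => m

/-- Conjugation in a composition algebra with unit `e`, fixing `e` and acting as `-1` on its
orthogonal complement. -/
noncomputable def conj (e : E) : E ≃ₗᵢ[ℝ] E := (ℝ ∙ e).reflection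

@[simp]
lemma conj_conj (x : E) : conj e (conj e x) = x :=
  Submodule.reflection_reflection _ x

lemma conj_eq_neg {x : E} (hx : ⟪e, x⟫_ℝ = 0) : conj e x = -x :=
  Submodule.reflection_mem_subspace_orthogonalComplement_eq_neg
    (Submodule.mem_orthogonal_singleton_iff_inner_right.2 hx)

lemma conj_eq_self_iff {x : E} : conj e x = x ↔ x ∈ ℝ ∙ e :=
  (ℝ ∙ e).reflection_eq_self_iff x

lemma inner_conj_left (x y : E) : ⟪conj e x, y⟫_ℝ = ⟪x, conj e y⟫_ℝ := by
  rw [← (conj e).inner_map_map, conj_conj]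

section Identities

variable (H : IsCompositionAlgebra m e)
include H

lemma conj_apply (x : E) : conj e x = (2 * ⟪e, x⟫_ℝ) • e - x := by
  simp [conj, Submodule.reflection_singleton_apply, H.norm_one, two_smul, two_mul, add_smul]

lemma flip : IsCompositionAlgebra m.flip e where
  one_mul := H.mul_one
  mul_one := H.one_mul
  norm_mul x y := (H.norm_mul y x).trans (mul_comm _ _)
  norm_one := H.norm_one

lemma flip_injective {y : E} (hy : y ≠ 0) : Function.Injective (m.flip y) :=
  (injective_iff_map_eq_zero _).2 fun x hx => by
    simpa [hy, H.norm_mul] using congrArg norm hx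

lemma inner_mul_mul_left (x y z : E) : ⟪x ⋆ y, x ⋆ z⟫_ℝ = ‖x‖ ^ 2 * ⟪y, z⟫_ℝ := by
  simp only [real_inner_eq_norm_add_mul_self_sub_norm_mul_self_sub_norm_mul_self_div_two,
    ← map_add, H.norm_mul]
  ring

lemma inner_mul_add_inner_mul (x y u z : E) :
    ⟪x ⋆ y, u ⋆ z⟫_ℝ + ⟪u ⋆ y, x ⋆ z⟫_ℝ = 2 * ⟪x, u⟫_ℝ * ⟪y, z⟫_ℝ := by
  have hxu := H.inner_mul_mul_left (x + u) y z
  simp only [map_add, LinearMap.add_apply, inner_add_left, inner_add_right, H.inner_mul_mul_left,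
    norm_add_sq_real] at hxu
  linarith

lemma inner_mul_eq_inner_conj_mul (x y z : E) : ⟪x ⋆ y, z⟫_ℝ = ⟪y, conj e x ⋆ z⟫_ℝ := by
  have h := H.inner_mul_add_inner_mul x y e z
  simp only [H.one_mul, real_inner_comm e x] at h
  simp only [H.conj_apply, map_sub, map_smul, LinearMap.sub_apply, LinearMap.smul_apply, H.one_mul,
    inner_sub_right, inner_smul_right]
  linarith

lemma inner_mul_eq_inner_mul_conj (x y z : E) : ⟪x ⋆ y, z⟫_ℝ = ⟪x, z ⋆ conj e y⟫_ℝ :=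
  H.flip.inner_mul_eq_inner_conj_mul y x z

lemma conj_mul (x y : E) : conj e (x ⋆ y) = conj e y ⋆ conj e x := by
  refine ext_inner_right ℝ fun t => ?_
  calc ⟪conj e (x ⋆ y), t⟫_ℝ
      = ⟪y, conj e x ⋆ conj e t⟫_ℝ := by rw [inner_conj_left, H.inner_mul_eq_inner_conj_mul]
    _ = ⟪y ⋆ t, conj e x⟫_ℝ := (H.inner_mul_eq_inner_mul_conj y t _).symm
    _ = ⟪conj e y ⋆ conj e x, t⟫_ℝ := by
        rw [H.inner_mul_eq_inner_conj_mul (conj e y), conj_conj, real_inner_comm]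

lemma conj_mul_mul_add_conj_mul_mul (x u y : E) :
    conj e x ⋆ (u ⋆ y) + conj e u ⋆ (x ⋆ y) = (2 * ⟪x, u⟫_ℝ) • y := by
  refine ext_inner_right ℝ fun t => ?_
  rw [inner_add_left, H.inner_mul_eq_inner_conj_mul (conj e x),
    H.inner_mul_eq_inner_conj_mul (conj e u), conj_conj, conj_conj, add_comm,
    H.inner_mul_add_inner_mul, real_inner_smul_left]

lemma mul_mul_conj_add_mul_mul_conj (x y u : E) :
    (x ⋆ y) ⋆ conj e u + (x ⋆ u) ⋆ conj e y = (2 * ⟪y, u⟫_ℝ) • x := by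
  simpa [real_inner_comm, add_comm] using H.flip.conj_mul_mul_add_conj_mul_mul y u x

lemma mul_mul_conj (x y : E) : (x ⋆ y) ⋆ conj e y = ‖y‖ ^ 2 • x := by
  have h := H.mul_mul_conj_add_mul_mul_conj x y y
  rw [← two_smul ℝ, mul_smul, real_inner_self_eq_norm_sq] at h
  exact smul_right_injective E two_ne_zero h

end Identities

/-- The subspace `B` is a subalgebra of `(E, m)` containing the unit `e`. -/
structure IsUnitalSubalgebra (m : E →ₗ[ℝ] E →ₗ[ℝ] E) (e : E) (B : Submodule ℝ E) : Prop where
  one_mem : e ∈ B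
  mul_mem : ∀ {x y}, x ∈ B → y ∈ B → m x y ∈ B

/-- The Cayley–Dickson double `B + Bj` of `B` inside the ambient algebra. -/
abbrev double (m : E →ₗ[ℝ] E →ₗ[ℝ] E) (B : Submodule ℝ E) (j : E) : Submodule ℝ E :=
  B ⊔ B.map (m.flip j)

lemma le_double (B : Submodule ℝ E) (j : E) : B ≤ double m B j := le_sup_left

lemma mul_mem_double {B : Submodule ℝ E} {b : E} (hb : b ∈ B) (j : E) : b ⋆ j ∈ double m B j :=
  Submodule.mem_sup_right (Submodule.mem_map_of_mem hb)

section Doubling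

variable {B : Submodule ℝ E} {a b c d j : E} (H : IsCompositionAlgebra m e)
  (S : IsUnitalSubalgebra m e B) (hj : j ∈ Bᗮ)
include H

lemma isUnitalSubalgebra_span_one : IsUnitalSubalgebra m e (ℝ ∙ e) where
  one_mem := Submodule.mem_span_singleton_self e
  mul_mem hx hy := by
    obtain ⟨r, rfl⟩ := Submodule.mem_span_singleton.1 hx
    simpa [H.one_mul] using Submodule.smul_mem _ r hy

include S

lemma mem_double (j : E) : j ∈ double m B j := by
  simpa [H.one_mul] using mul_mem_double (m := m) S.one_mem j

lemma conj_mem (hb : b ∈ B) : conj e b ∈ B := by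
  rw [H.conj_apply]
  exact B.sub_mem (B.smul_mem _ S.one_mem) hb

include hj

omit H in
lemma conj_eq_neg_of_mem_orthogonal : conj e j = -j :=
  conj_eq_neg (hj e S.one_mem)

lemma mul_mem_orthogonal (hb : b ∈ B) : b ⋆ j ∈ Bᗮ := fun d hd => by
  rw [real_inner_comm, H.inner_mul_eq_inner_conj_mul, real_inner_comm]
  exact hj _ (S.mul_mem (H.conj_mem S hb) hd)

lemma mul_left_comm_conj (ha : a ∈ B) (x : E) : a ⋆ (j ⋆ x) = j ⋆ (conj e a ⋆ x) := by
  have h := H.conj_mul_mul_add_conj_mul_mul (conj e a) j x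
  rw [hj _ (H.conj_mem S ha), conj_conj, conj_eq_neg_of_mem_orthogonal S hj] at h
  simpa [add_neg_eq_zero] using h

lemma mul_comm_conj (ha : a ∈ B) : a ⋆ j = j ⋆ conj e a := by
  simpa [H.mul_one] using H.mul_left_comm_conj S hj ha e

lemma mul_mul_eq_swap_mul (ha : a ∈ B) (hd : d ∈ B) : a ⋆ (d ⋆ j) = (d ⋆ a) ⋆ j := by
  rw [H.mul_comm_conj S hj hd, H.mul_left_comm_conj S hj ha, ← H.conj_mul,
    ← H.mul_comm_conj S hj (S.mul_mem hd ha)]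

lemma mul_right_comm_conj (x : E) (hc : c ∈ B) : (x ⋆ j) ⋆ c = (x ⋆ conj e c) ⋆ j := by
  have h := H.mul_mul_conj_add_mul_mul_conj x j (conj e c)
  rw [real_inner_comm, hj _ (H.conj_mem S hc), conj_conj, conj_eq_neg_of_mem_orthogonal S hj] at h
  simpa [add_neg_eq_zero] using h

lemma mul_mul_mul_eq_neg_conj_mul (hb : b ∈ B) (hd : d ∈ B) :
    (b ⋆ j) ⋆ (d ⋆ j) = -(‖j‖ ^ 2 • (conj e d ⋆ b)) := by
  have hbj := H.mul_mem_orthogonal S hj hb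
  have hsq : (b ⋆ j) ⋆ j = -(‖j‖ ^ 2 • b) := by
    simpa [conj_eq_neg_of_mem_orthogonal S hj, neg_eq_iff_eq_neg] using H.mul_mul_conj b j
  have h := H.conj_mul_mul_add_conj_mul_mul (b ⋆ j) d j
  rw [real_inner_comm, hbj d hd, conj_eq_neg_of_mem_orthogonal S hbj, hsq] at h
  simpa [neg_add_eq_zero] using h

lemma isUnitalSubalgebra_double : IsUnitalSubalgebra m e (double m B j) where
  one_mem := le_double B j S.one_mem
  mul_mem hx hy := by
    obtain ⟨a, ha, _, ⟨b, hb, rfl⟩, rfl⟩ := Submodule.mem_sup.1 hx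
    obtain ⟨c, hc, _, ⟨d, hd, rfl⟩, rfl⟩ := Submodule.mem_sup.1 hy
    simp only [LinearMap.flip_apply, map_add, LinearMap.add_apply]
    rw [H.mul_mul_eq_swap_mul S hj ha hd, H.mul_right_comm_conj S hj b hc,
      H.mul_mul_mul_eq_neg_conj_mul S hj hb hd]
    exact add_mem
      (add_mem (le_double B j (S.mul_mem ha hc))
        (mul_mem_double (S.mul_mem hb (H.conj_mem S hc)) j))
      (add_mem (mul_mem_double (S.mul_mem hd ha) j)
        (neg_mem (Submodule.smul_mem _ _ (le_double B j (S.mul_mem (H.conj_mem S hd) hb)))))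

variable (hj₀ : j ≠ 0)
include hj₀

lemma finrank_double [FiniteDimensional ℝ B] :
    finrank ℝ (double m B j) = 2 * finrank ℝ B := by
  have hdisj : Disjoint B (B.map (m.flip j)) := by
    refine B.orthogonal_disjoint.mono_right (Submodule.map_le_iff_le_comap.2 fun b hb => ?_)
    exact H.mul_mem_orthogonal S hj hb
  have hmap : finrank ℝ (B.map (m.flip j)) = finrank ℝ B :=
    (Submodule.equivMapOfInjective _ (H.flip_injective hj₀) B).finrank_eq.symm
  have h := Submodule.finrank_sup_add_finrank_inf_eq B (B.map (m.flip j))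
  rwa [hdisj.eq_bot, finrank_bot, add_zero, hmap, ← two_mul] at h

lemma mul_assoc_of_mem_orthogonal (ha : a ∈ B) (hc : c ∈ B) (hd : d ∈ B) :
    (a ⋆ c) ⋆ d = a ⋆ (c ⋆ d) := by
  have ha' := H.conj_mem S ha
  have hc' := H.conj_mem S hc
  have hdj := H.mul_mem_orthogonal S hj hd
  have hdouble : (d ⋆ j) ⋆ (conj e a ⋆ (conj e c ⋆ j)) = a ⋆ ((d ⋆ j) ⋆ (conj e c ⋆ j)) := by
    have h := H.conj_mul_mul_add_conj_mul_mul (d ⋆ j) (conj e a) (conj e c ⋆ j)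
    rw [real_inner_comm, hdj _ ha', conj_eq_neg_of_mem_orthogonal S hdj, conj_conj] at h
    simpa [neg_add_eq_zero] using h
  have hleft : (d ⋆ j) ⋆ (conj e a ⋆ (conj e c ⋆ j)) = -(‖j‖ ^ 2 • ((a ⋆ c) ⋆ d)) := by
    rw [H.mul_mul_eq_swap_mul S hj ha' hc',
      H.mul_mul_mul_eq_neg_conj_mul S hj hd (S.mul_mem hc' ha'), H.conj_mul, conj_conj, conj_conj]
  have hright : a ⋆ ((d ⋆ j) ⋆ (conj e c ⋆ j)) = -(‖j‖ ^ 2 • (a ⋆ (c ⋆ d))) := by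
    rw [H.mul_mul_mul_eq_neg_conj_mul S hj hd hc', conj_conj, map_neg, map_smul]
  exact smul_right_injective E (pow_ne_zero 2 (norm_ne_zero_iff.2 hj₀))
    (neg_injective (hleft.symm.trans (hdouble.trans hright)))

lemma mul_comm_of_assoc_double
    (hassoc : ∀ {x y z}, x ∈ double m B j → y ∈ double m B j → z ∈ double m B j →
      (x ⋆ y) ⋆ z = x ⋆ (y ⋆ z))
    (ha : a ∈ B) (hb : b ∈ B) : a ⋆ b = b ⋆ a := by
  refine H.flip_injective hj₀ ?_
  calc (a ⋆ b) ⋆ j = a ⋆ (b ⋆ j) :=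
        hassoc (le_double B j ha) (le_double B j hb) (H.mem_double S j)
    _ = (b ⋆ a) ⋆ j := H.mul_mul_eq_swap_mul S hj ha hb

lemma conj_eq_self_of_comm_double
    (hcomm : ∀ {x y}, x ∈ double m B j → y ∈ double m B j → x ⋆ y = y ⋆ x) (ha : a ∈ B) :
    conj e a = a := by
  refine H.flip.flip_injective hj₀ ?_
  calc j ⋆ conj e a = a ⋆ j := (H.mul_comm_conj S hj ha).symm
    _ = j ⋆ a := hcomm (le_double B j ha) (H.mem_double S j)

lemma conj_eq_self_of_mem_orthogonal_double_double {k l : E}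
    (hk : k ∈ (double m B j)ᗮ) (hk₀ : k ≠ 0) (hl : l ∈ (double m (double m B j) k)ᗮ) (hl₀ : l ≠ 0)
    (ha : a ∈ B) : conj e a = a := by
  have S' := H.isUnitalSubalgebra_double S hj
  have S'' := H.isUnitalSubalgebra_double S' hk
  exact H.conj_eq_self_of_comm_double S hj hj₀
    (H.mul_comm_of_assoc_double S' hk hk₀ (H.mul_assoc_of_mem_orthogonal S'' hl hl₀)) ha

end Doubling

lemma finrank_eq_or_exists_double {B : Submodule ℝ E} [FiniteDimensional ℝ B]
    (H : IsCompositionAlgebra m e) (S : IsUnitalSubalgebra m e B) :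
    finrank ℝ E = finrank ℝ B ∨ ∃ j ∈ Bᗮ, j ≠ 0 ∧ IsUnitalSubalgebra m e (double m B j) ∧
      finrank ℝ (double m B j) = 2 * finrank ℝ B := by
  rcases eq_or_ne B ⊤ with rfl | hB
  · exact .inl (finrank_top ℝ E).symm
  · obtain ⟨j, hj, hj₀⟩ :=
      Submodule.exists_mem_ne_zero_of_ne_bot (mt Submodule.orthogonal_eq_bot_iff.1 hB)
    exact .inr ⟨j, hj, hj₀, H.isUnitalSubalgebra_double S hj, H.finrank_double S hj hj₀⟩

theorem finrank_eq_one_or_two_or_four_or_eight (H : IsCompositionAlgebra m e) :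
    finrank ℝ E = 1 ∨ finrank ℝ E = 2 ∨ finrank ℝ E = 4 ∨ finrank ℝ E = 8 := by
  have he₀ : e ≠ 0 := norm_ne_zero_iff.1 (H.norm_one.trans_ne one_ne_zero)
  have d₀ : finrank ℝ (ℝ ∙ e) = 1 := finrank_span_singleton he₀
  have S₀ := H.isUnitalSubalgebra_span_one
  obtain h | ⟨i, hi, hi₀, S₁, d₁⟩ := H.finrank_eq_or_exists_double S₀
  · omega
  obtain h | ⟨j, hj, hj₀, S₂, d₂⟩ := H.finrank_eq_or_exists_double S₁
  · omega
  obtain h | ⟨k, hk, hk₀, S₃, d₃⟩ := H.finrank_eq_or_exists_double S₂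
  · omega
  obtain h | ⟨l, hl, hl₀, -⟩ := H.finrank_eq_or_exists_double S₃
  · omega
  have hi_conj : conj e i = i :=
    H.conj_eq_self_of_mem_orthogonal_double_double S₁ hj hj₀ hk hk₀ hl hl₀ (H.mem_double S₀ i)
  have hi_mem : i ∈ ℝ ∙ e := conj_eq_self_iff.1 hi_conj
  exact absurd (Submodule.disjoint_def.1 (ℝ ∙ e).orthogonal_disjoint i hi_mem hi) hi₀

end IsCompositionAlgebra

/-- Hurwitz / Bott–Milnor–Kervaire theorem: a nonzero finite-dimensional real
normed vector space carrying a bilinear multiplication with a two-sided unit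
and a multiplicative norm (a normed division algebra over `ℝ`) has real
dimension `1`, `2`, `4`, or `8`. -/
theorem normed_division_algebra_dim {E : Type*} [NormedAddCommGroup E]
    [NormedSpace ℝ E] [FiniteDimensional ℝ E] [Nontrivial E]
    (m : E →ₗ[ℝ] E →ₗ[ℝ] E) (e : E)
    (h_unit_left : ∀ x : E, m e x = x) (h_unit_right : ∀ x : E, m x e = x)
    (h_norm : ∀ x y : E, ‖m x y‖ = ‖x‖ * ‖y‖) :
    Module.finrank ℝ E = 1 ∨ Module.finrank ℝ E = 2 ∨
      Module.finrank ℝ E = 4 ∨ Module.finrank ℝ E = 8 := by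
  let _ : InnerProductSpace ℝ E :=
    InnerProductSpace.ofNorm ℝ (parallelogram_law_of_norm_map₂_eq_mul m h_norm)
  obtain ⟨x, hx⟩ := exists_ne (0 : E)
  have h_norm_one : ‖e‖ = 1 := by
    simpa [h_unit_left, hx] using h_norm e x
  exact IsCompositionAlgebra.finrank_eq_one_or_two_or_four_or_eight (m := m) (e := e)
    ⟨h_unit_left, h_unit_right, h_norm, h_norm_one⟩
end

section
/- For all octonions x and y, N(x·y) = N(x)·N(y), i.e. the octonions form a composition algebra. -/
/-- The octonions, realized via the Cayley–Dickson construction as pairs of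
real quaternions. -/
abbrev Octonion : Type := Quaternion ℝ × Quaternion ℝ

/-- Cayley–Dickson multiplication: `(a,b)·(c,d) = (a c − d̄ b, d a + b c̄)`. -/
noncomputable def octMul (x y : Octonion) : Octonion :=
  (x.1 * y.1 - star y.2 * x.2, y.2 * x.1 + x.2 * star y.1)

/-- Octonionic conjugation: `conj (a,b) = (ā, −b)`. -/
noncomputable def octConj (x : Octonion) : Octonion := (star x.1, -x.2)

/-- The octonionic norm: `N (a,b) = ‖a‖² + ‖b‖²` (sum of quaternionic
norm-squares). -/
noncomputable def octN (x : Octonion) : ℝ :=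
  Quaternion.normSq x.1 + Quaternion.normSq x.2

/-!
Expanding the norms of the two components `a c - d̄ b` and `d a + b c̄` gives the four products of
norms making up `(N a + N b) (N c + N d)`, together with the traces of `d (a c b̄)` and `(a c b̄) d`
with opposite signs. These traces cancel because `tr (x y) = tr (y x)`.
-/

/-- Every norm `x * star x` of the star ring `A` is central. This abstracts the involution of an
associative composition algebra; norms are kept as elements of `A`, so that no ring of scalars has
to be named. -/
def HasCentralNorms (A : Type*) [Ring A] [StarRing A] : Prop :=
  ∀ x : A, x * star x ∈ Subring.center A

namespace HasCentralNorms

variable {A : Type*} [Ring A] [StarRing A]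

theorem mul_star_self_comm (hA : HasCentralNorms A) (x y : A) :
    x * star x * y = y * (x * star x) :=
  (Subring.mem_center_iff.mp (hA x) y).symm

theorem add_star_mem_center (hA : HasCentralNorms A) (x : A) : x + star x ∈ Subring.center A := by
  have h_polar : x + star x = (1 + x) * star (1 + x) - 1 - x * star x := by
    rw [star_add, star_one]
    noncomm_ring
  rw [h_polar]
  exact sub_mem (sub_mem (hA (1 + x)) (one_mem _)) (hA x)

theorem star_comm_self (hA : HasCentralNorms A) (x : A) :
    star x * x = x * star x := by
  have h_comm : x * (x + star x) = (x + star x) * x :=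
    Subring.mem_center_iff.mp (hA.add_star_mem_center x) x
  rw [mul_add, add_mul] at h_comm
  exact (add_left_cancel h_comm).symm

-- Polarize `star z * z = z * star z` at `z = x + star y`.
theorem mul_add_star_mul_comm (hA : HasCentralNorms A) (x y : A) :
    x * y + star (x * y) = y * x + star (y * x) := by
  have h_sum := hA.star_comm_self (x + star y)
  have h_left := hA.star_comm_self x
  have h_right := hA.star_comm_self y
  simp only [star_add, star_star, add_mul, mul_add, h_left, h_right] at h_sum
  rw [star_mul, star_mul]
  linear_combination (norm := abel) -h_sum

theorem mul_mul_star_mul (hA : HasCentralNorms A) (x y : A) :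
    x * y * star (x * y) = x * star x * (y * star y) :=
  calc x * y * star (x * y) = x * (y * star y * star x) := by simp only [star_mul, mul_assoc]
    _ = x * (star x * (y * star y)) := by rw [hA.mul_star_self_comm]
    _ = x * star x * (y * star y) := (mul_assoc _ _ _).symm

end HasCentralNorms

theorem hasCentralNorms_quaternion (R : Type*) [CommRing R] : HasCentralNorms (Quaternion R) := by
  intro x
  rw [Quaternion.self_mul_star, Subring.mem_center_iff]
  exact fun y => (Quaternion.coe_commutes _ y).symm

theorem octonion_norm_mul_general {A : Type*} [Ring A] [StarRing A] (hA : HasCentralNorms A)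
    (a b c d : A) :
    (a * c - star d * b) * star (a * c - star d * b) +
        (d * a + b * star c) * star (d * a + b * star c) =
      (a * star a + b * star b) * (c * star c + d * star d) := by
  have h_cross := hA.mul_add_star_mul_comm d (a * c * star b)
  calc
    _ = a * c * star (a * c) + star d * b * star (star d * b) +
          (d * a * star (d * a) + b * star c * star (b * star c)) +
          ((d * (a * c * star b) + star (d * (a * c * star b))) -
            (a * c * star b * d + star (a * c * star b * d))) := by
      simp only [star_add, star_sub, star_mul, star_star]
      noncomm_ring
    _ = a * c * star (a * c) + star d * b * star (star d * b) +
          (d * a * star (d * a) + b * star c * star (b * star c)) := by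
      rw [h_cross, sub_self, add_zero]
    _ = a * star a * (c * star c) + b * star b * (d * star d) +
          (a * star a * (d * star d) + b * star b * (c * star c)) := by
      simp only [hA.mul_mul_star_mul, star_star, hA.star_comm_self, hA.mul_star_self_comm d]
    _ = (a * star a + b * star b) * (c * star c + d * star d) := by noncomm_ring

/-- The octonions form a composition algebra: `N(x·y) = N(x)·N(y)`. -/
theorem octonion_norm_mul (x y : Octonion) :
    octN (octMul x y) = octN x * octN y := by
  simpa only [octN, octMul, Quaternion.self_mul_star, ← Quaternion.coe_add, ← Quaternion.coe_mul,
    Quaternion.coe_inj] using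
    octonion_norm_mul_general (hasCentralNorms_quaternion ℝ) x.1 x.2 y.1 y.2
end

section
/- The octonions form a division algebra: for all octonions x and y, if x·y = 0 then x = 0 or y = 0. -/
/-!
The norm `N(a, b) = N a + N b` is multiplicative. In `N((a, b) · (c, d))` the diagonal terms give
`(N a + N b) * (N c + N d)`, and the two polar terms `-2 Re (a c b̄ d)` and `2 Re (d a c b̄)`
cancel because the real part of a quaternion product is invariant under cyclic permutation of the
factors. Over a linearly ordered ring `N` takes values in a domain and vanishes only at zero.
-/

open Quaternion

/-- The Cayley–Dickson product on pairs over a ring `A` with involution, in the sign and order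
conventions of `octMul`, which is the case `A = ℍ[ℝ]`; it gives octonions over other scalars. -/
def cayleyDicksonMul {A : Type*} [NonUnitalNonAssocRing A] [Star A] (x y : A × A) : A × A :=
  (x.1 * y.1 - star y.2 * x.2, y.2 * x.1 + x.2 * star y.1)

/-- The octonion norm `N(a, b) = N a + N b` with coefficients in a commutative ring, the form that
`cayleyDicksonMul` preserves; over `ℝ` it is the square of the Euclidean norm. -/
def octNormSq {R : Type*} [CommRing R] (x : ℍ[R] × ℍ[R]) : R :=
  normSq x.1 + normSq x.2

section CommRing

variable {R : Type*} [CommRing R]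

theorem quaternion_re_mul_comm (p q : ℍ[R]) : (p * q).re = (q * p).re := by
  simp only [re_mul]
  ring

theorem quaternion_normSq_sub (p q : ℍ[R]) :
    normSq (p - q) = normSq p + normSq q - 2 * (p * star q).re := by
  rw [sub_eq_add_neg, normSq_add, normSq_neg, star_neg, mul_neg, re_neg, mul_neg, sub_eq_add_neg]

theorem octNormSq_cayleyDicksonMul (x y : ℍ[R] × ℍ[R]) :
    octNormSq (cayleyDicksonMul x y) = octNormSq x * octNormSq y := by
  obtain ⟨a, b⟩ := x
  obtain ⟨c, d⟩ := y
  have polar_eq : (a * c * star (star d * b)).re = (d * a * star (b * star c)).re :=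
    calc (a * c * star (star d * b)).re
      _ = (a * c * star b * d).re := by rw [star_mul, star_star, ← mul_assoc]
      _ = (d * (a * c * star b)).re := quaternion_re_mul_comm _ _
      _ = (d * a * star (b * star c)).re := by simp only [star_mul, star_star, mul_assoc]
  simp only [octNormSq, cayleyDicksonMul, quaternion_normSq_sub, normSq_add, polar_eq, map_mul,
    normSq_star]
  ring

end CommRing

section LinearOrderedRing

variable {R : Type*} [CommRing R] [LinearOrder R] [IsStrictOrderedRing R]

theorem octNormSq_eq_zero {x : ℍ[R] × ℍ[R]} : octNormSq x = 0 ↔ x = 0 := by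
  rw [octNormSq, add_eq_zero_iff_of_nonneg normSq_nonneg normSq_nonneg, normSq_eq_zero,
    normSq_eq_zero, Prod.ext_iff, Prod.fst_zero, Prod.snd_zero]

theorem octonion_division_general (x y : ℍ[R] × ℍ[R]) (h : cayleyDicksonMul x y = 0) :
    x = 0 ∨ y = 0 := by
  have norm_mul_eq_zero : octNormSq x * octNormSq y = 0 := by
    rw [← octNormSq_cayleyDicksonMul, octNormSq_eq_zero, h]
  exact (mul_eq_zero.mp norm_mul_eq_zero).imp octNormSq_eq_zero.mp octNormSq_eq_zero.mp

end LinearOrderedRing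

/-- The octonions form a division algebra: a product vanishes only if one of
its factors does. -/
theorem octonion_division (x y : Octonion) (h : octMul x y = 0) :
    x = 0 ∨ y = 0 :=
  octonion_division_general x y h
end

section
/- Right multiplication by a unit split octonion parallelizes the pseudo-sphere S^{3,4}: let x be a split octonion with N(x) = 1. Then for the seven imaginary units e₁,…,e₇ and all i, j ∈ {1,…,7}: B(eᵢ·x, x) = 0 and B(eᵢ·x, eⱼ·x) = ηᵢⱼ, where η = diag(1,1,1,−1,−1,−1,−1); i.e. the seven vectors eᵢ·x are orthogonal to x and form a Lorentz-orthonormal frame of the tangent space of S^{3,4} at x. -/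
/-- The split octonions, realized via the Cayley–Dickson construction as pairs
of real quaternions. -/
abbrev SplitOctonion : Type := Quaternion ℝ × Quaternion ℝ

/-- Cayley–Dickson multiplication for split octonions:
`(a,b)·(c,d) = (a c + d̄ b, d a + b c̄)`. -/
noncomputable def soMul (x y : SplitOctonion) : SplitOctonion :=
  (x.1 * y.1 + star y.2 * x.2, y.2 * x.1 + x.2 * star y.1)

/-- The split-octonionic norm: `N (a,b) = ‖a‖² − ‖b‖²` (difference of
quaternionic norm-squares). -/
noncomputable def soN (x : SplitOctonion) : ℝ :=
  Quaternion.normSq x.1 - Quaternion.normSq x.2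

/-- The bilinear form associated with the split-octonionic norm. -/
noncomputable def soB (u v : SplitOctonion) : ℝ :=
  (soN (u + v) - soN u - soN v) / 2

/-- The seven imaginary units of the split octonions:
`e₁ = (i,0)`, `e₂ = (j,0)`, `e₃ = (k,0)`, `e₄ = (0,1)`, `e₅ = (0,i)`,
`e₆ = (0,j)`, `e₇ = (0,k)`. -/
noncomputable def soUnit : Fin 7 → SplitOctonion :=
  ![((⟨0, 1, 0, 0⟩ : Quaternion ℝ), 0),
    ((⟨0, 0, 1, 0⟩ : Quaternion ℝ), 0),
    ((⟨0, 0, 0, 1⟩ : Quaternion ℝ), 0),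
    (0, 1),
    (0, (⟨0, 1, 0, 0⟩ : Quaternion ℝ)),
    (0, (⟨0, 0, 1, 0⟩ : Quaternion ℝ)),
    (0, (⟨0, 0, 0, 1⟩ : Quaternion ℝ))]

/-- The flat metric `η = diag(1,1,1,−1,−1,−1,−1)` of signature `(3,4)`. -/
def eta34 (i j : Fin 7) : ℝ :=
  if i = j then (if (i : ℕ) < 3 then 1 else -1) else 0

/-!
The norm `N` is multiplicative: in `N(x·y)` the cross terms of the two components cancel because
`re (p q) = re (q p)` for quaternions. Polarising in the left factor gives
`B(u·x, v·x) = B(u, v) N(x)`, so right multiplication by `x` scales the bilinear form by `N(x)`. It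
therefore carries the `B`-orthogonal family `1, e₁, …, e₇` to a `B`-orthogonal family which, when
`N(x) = 1`, has the same norms and starts with `1·x = x`.
-/

open Quaternion

theorem quaternionAlgebra_re_mul_comm {R : Type*} [CommRing R] {c₁ c₃ : R} (a b : ℍ[R,c₁,0,c₃]) :
    (a * b).re = (b * a).re := by
  simp only [QuaternionAlgebra.re_mul]
  ring

theorem soN_soMul (x y : SplitOctonion) : soN (soMul x y) = soN x * soN y := by
  obtain ⟨a, b⟩ := x
  obtain ⟨c, d⟩ := y
  have cross_terms_eq : (a * c * star (star d * b)).re = (d * a * star (b * star c)).re :=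
    calc (a * c * star (star d * b)).re
      _ = (a * c * star b * d).re := by rw [star_mul, star_star, ← mul_assoc]
      _ = (d * (a * c * star b)).re := quaternionAlgebra_re_mul_comm _ _
      _ = (d * a * star (b * star c)).re := by simp only [star_mul, star_star, mul_assoc]
  simp only [soN, soMul, normSq_add, map_mul, normSq_star, cross_terms_eq]
  ring

theorem add_soMul (u v x : SplitOctonion) : soMul (u + v) x = soMul u x + soMul v x := by
  ext1 <;> simp only [soMul, Prod.fst_add, Prod.snd_add, add_mul, mul_add] <;> abel

theorem soB_soMul_soMul (u v x : SplitOctonion) :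
    soB (soMul u x) (soMul v x) = soB u v * soN x := by
  simp only [soB, ← add_soMul, soN_soMul]
  ring

theorem soB_eq_re_mul_star_sub (u v : SplitOctonion) :
    soB u v = (u.1 * star v.1).re - (u.2 * star v.2).re := by
  simp only [soB, soN, Prod.fst_add, Prod.snd_add, normSq_add]
  ring

/-- The unit of the split octonions. It is not the numeral `1`, which for the product type
`SplitOctonion` is the pair `(1, 1)`. -/
noncomputable def soOne : SplitOctonion := (1, 0)

theorem soOne_soMul (x : SplitOctonion) : soMul soOne x = x := by
  simp [soMul, soOne]

theorem soB_soOne (u : SplitOctonion) : soB u soOne = u.1.re := by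
  simp [soB_eq_re_mul_star_sub, soOne]

theorem soB_soMul_self (u x : SplitOctonion) : soB (soMul u x) x = u.1.re * soN x := by
  simpa only [soOne_soMul, soB_soOne] using soB_soMul_soMul u soOne x

theorem re_fst_soUnit (i : Fin 7) : (soUnit i).1.re = 0 := by
  fin_cases i <;> simp [soUnit]

theorem soB_soUnit_soUnit (i j : Fin 7) : soB (soUnit i) (soUnit j) = eta34 i j := by
  simp only [soB_eq_re_mul_star_sub, re_mul, re_star, imI_star, imJ_star, imK_star]
  fin_cases i <;> fin_cases j <;> simp [soUnit, eta34]

theorem splitOctonion_parallelization_general (x : SplitOctonion) :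
    (∀ i : Fin 7, soB (soMul (soUnit i) x) x = 0) ∧
    (∀ i j : Fin 7, soB (soMul (soUnit i) x) (soMul (soUnit j) x) = eta34 i j * soN x) :=
  ⟨fun i ↦ by rw [soB_soMul_self, re_fst_soUnit, zero_mul],
    fun i j ↦ by rw [soB_soMul_soMul, soB_soUnit_soUnit]⟩

/-- Right multiplication by a unit split octonion parallelizes the
pseudo-sphere `S^{3,4}`: if `N(x) = 1`, the seven tangent vectors `eᵢ·x` are
orthogonal to `x` and form a Lorentz-orthonormal frame at `x`. -/
theorem splitOctonion_parallelization (x : SplitOctonion) (hx : soN x = 1) :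
    (∀ i : Fin 7, soB (soMul (soUnit i) x) x = 0) ∧
    (∀ i j : Fin 7, soB (soMul (soUnit i) x) (soMul (soUnit j) x) = eta34 i j) := by
  simpa only [hx, mul_one] using splitOctonion_parallelization_general x
end

section
/- Rigidity of the manifestly duality-invariant first-order action (no non-abelian Yang–Mills deformation): let ι be a finite type, let Ω : Matrix ι ι ℝ be invertible and antisymmetric (Ωᵀ = −Ω), and let C : ι → ι → ι → ℝ with components C^M_{NP} satisfy (i) antisymmetry in the last two indices, C^M_{NP} = −C^M_{PN}, and (ii) the symplectic-invariance condition on the lowered tensor C_{MNP} := Σ_Q Ω_{MQ} C^Q_{NP}, namely C_{NPM} = C_{MPN} for all M, N, P. Then C^M_{NP} = 0 for all M, N, P. In particular, structure constants of a gauge group whose adjoint action preserves the symplectic form Ω must vanish. -/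
open Finset Matrix

section ThreeIndexTensors

variable {α G : Type*} {T : α → α → α → G}

/- The transpositions (1 3) and (2 3) are conjugate in the symmetric group on the index slots, so
the signs `1` and `-1` by which they act on `T` must agree. -/
lemma eq_neg_self_of_swap_outer_of_neg_swap_last [InvolutiveNeg G]
    (h_outer : ∀ a b c, T a b c = T c b a) (h_last : ∀ a b c, T a b c = -T a c b) (a b c : α) :
    T a b c = -T a b c :=
  calc
    T a b c = -T a c b := h_last a b c
    _ = -T b c a := by rw [h_outer a c b]
    _ = T b a c := by rw [h_last b c a, neg_neg]
    _ = T c a b := h_outer b a c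
    _ = -T c b a := h_last c a b
    _ = -T a b c := by rw [h_outer c b a]

lemma eq_zero_of_swap_outer_of_neg_swap_last [AddGroup G] (h_two : IsSMulRegular G (2 : ℕ))
    (h_outer : ∀ a b c, T a b c = T c b a) (h_last : ∀ a b c, T a b c = -T a c b) (a b c : α) :
    T a b c = 0 := by
  have h_neg := eq_neg_self_of_swap_outer_of_neg_swap_last h_outer h_last a b c
  have h_double : 2 • T a b c = 2 • (0 : G) := by
    rw [two_nsmul, nsmul_zero, ← eq_neg_iff_add_eq_zero]
    exact h_neg
  exact h_two h_double

end ThreeIndexTensors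

section LowerFirstIndex

variable {ι κ α β R : Type*} [Fintype κ]

/-- The tensor `C_{MNP} = Σ_Q Ω_{MQ} C^Q_{NP}` obtained from `C^Q_{NP}`, encoded as `C Q N P`, by
lowering its first index with `Ω`. The matrix `Ω` may be rectangular, so that the lowered index
can range over a different type. -/
def lowerFirstIndex [NonUnitalNonAssocSemiring R] (Ω : Matrix ι κ R) (C : κ → α → β → R)
    (M : ι) (N : α) (P : β) : R :=
  (Ω *ᵥ fun Q => C Q N P) M

lemma lowerFirstIndex_eq_neg_swap [NonUnitalNonAssocRing R] (Ω : Matrix ι κ R)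
    {C : κ → α → α → R} (h_anti : ∀ M N P, C M N P = -C M P N) (M : ι) (N P : α) :
    lowerFirstIndex Ω C M N P = -lowerFirstIndex Ω C M P N := by
  have h_slice : (fun Q => C Q N P) = -fun Q => C Q P N := funext fun Q => h_anti Q N P
  rw [lowerFirstIndex, h_slice, mulVec_neg, Pi.neg_apply, lowerFirstIndex]

lemma eq_zero_of_lowerFirstIndex_eq_zero [NonUnitalNonAssocSemiring R] {Ω : Matrix ι κ R}
    (hΩ : Function.Injective Ω.mulVec) {C : κ → α → β → R}
    (h_zero : ∀ M N P, lowerFirstIndex Ω C M N P = 0) (M : κ) (N : α) (P : β) :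
    C M N P = 0 := by
  have h_slice : Ω *ᵥ (fun Q => C Q N P) = Ω *ᵥ 0 := by
    rw [mulVec_zero]
    exact funext fun M' => h_zero M' N P
  exact congrFun (hΩ h_slice) M

end LowerFirstIndex

theorem no_yangMills_deformation_first_order_general {ι κ R : Type*} [Fintype κ]
    [NonUnitalNonAssocRing R] (h_two : IsSMulRegular R (2 : ℕ)) (Ω : Matrix ι κ R)
    (hΩ : Function.Injective Ω.mulVec) (C : κ → ι → ι → R)
    (h_anti : ∀ M N P, C M N P = -C M P N)
    (h_symp : ∀ M N P, lowerFirstIndex Ω C N P M = lowerFirstIndex Ω C M P N) :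
    ∀ M N P, C M N P = 0 :=
  eq_zero_of_lowerFirstIndex_eq_zero hΩ <|
    eq_zero_of_swap_outer_of_neg_swap_last h_two (fun M N P => h_symp P M N)
      (lowerFirstIndex_eq_neg_swap Ω h_anti)

/-- Rigidity of the manifestly duality-invariant first-order action: if the
candidate structure constants `C^M_{NP}` are antisymmetric in their last two
indices and the lowered tensor `C_{MNP} = Σ_Q Ω_{MQ} C^Q_{NP}` (with `Ω`
invertible and antisymmetric) is symmetric under the exchange of its first
and last indices, then all structure constants vanish: no non-abelian
Yang–Mills deformation preserves the symplectic form `Ω`. -/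
theorem no_yangMills_deformation_first_order {ι : Type*} [Fintype ι]
    [DecidableEq ι] (Ω : Matrix ι ι ℝ) (hΩ_inv : IsUnit Ω)
    (hΩ_anti : Ωᵀ = -Ω) (C : ι → ι → ι → ℝ)
    (h_anti : ∀ M N P, C M N P = -C M P N)
    (h_symp : ∀ M N P, (∑ Q, Ω N Q * C Q P M) = ∑ Q, Ω M Q * C Q P N) :
    ∀ M N P, C M N P = 0 :=
  no_yangMills_deformation_first_order_general (IsAddTorsionFree.nsmul_right_injective two_ne_zero)
    Ω (mulVec_injective_of_isUnit hΩ_inv) C h_anti h_symp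
end

section
/- The quadratic embedding-tensor constraint implies the Jacobi identity for the gauge structure constants: let Γ and ι be finite types, let (f_γ)_{γ∈Γ} be a family of real ι×ι matrices, and let C : Γ → Γ → Γ → ℝ satisfy the commutation relations f_δ f_γ − f_γ f_δ = −Σ_σ C^σ_{δγ} f_σ for all δ, γ ∈ Γ. Let k : Γ → ι → ℝ satisfy the quadratic constraint Σ_{γ,δ} k^γ_I k^δ_J C^σ_{γδ} − Σ_{γ,K} (f_γ)^K_I k^γ_J k^σ_K = 0 for all I, J ∈ ι and σ ∈ Γ. Define t^I_{JK} := Σ_γ (f_γ)^I_J k^γ_K and assume t^I_{JK} = −t^I_{KJ} for all I, J, K. Then t satisfies the Jacobi identity: Σ_J ( t^I_{JK} t^J_{LM} + t^I_{JL} t^J_{MK} + t^I_{JM} t^J_{KL} ) = 0 for all I, K, L, M ∈ ι. -/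
open Finset

/-!
The generators `X_M = Σ_γ k^γ_M f_γ` of the gauged symmetries have matrix entries
`(X_M)^I_J = t^I_{JM}`. The quadratic constraint says precisely that the commutation relations of
the `f_γ` turn into `[X_L, X_M] = -Σ_J t^J_{LM} X_J`. Read entrywise, this is a Leibniz identity for
`t`, and antisymmetry of `t` in its lower indices makes it the Jacobi identity.
-/

section GaugeGenerator

variable {R 𝔤 Γ ι : Type*} [CommRing R] [Fintype Γ]

/-- The rigid symmetry `X_M = Σ_γ k^γ_M f_γ` gauged by the vector field `M`, for an embedding
tensor `k` and rigid symmetries `f` valued in an arbitrary module. -/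
def gaugeGenerator [AddCommMonoid 𝔤] [Module R 𝔤] (f : Γ → 𝔤) (k : Γ → ι → R) (M : ι) : 𝔤 :=
  ∑ γ, k γ M • f γ

theorem gaugeGenerator_apply {m n : Type*} (f : Γ → Matrix m n R) (k : Γ → ι → R) (M : ι)
    (i : m) (j : n) : gaugeGenerator f k M i j = ∑ γ, f γ i j * k γ M := by
  simp only [gaugeGenerator, Matrix.sum_apply, Matrix.smul_apply, smul_eq_mul, mul_comm]

variable [LieRing 𝔤] [LieAlgebra R 𝔤] {f : Γ → 𝔤} {C : Γ → Γ → Γ → R}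

theorem lie_gaugeGenerator (h_comm : ∀ δ γ, ⁅f δ, f γ⁆ = -∑ σ, C σ δ γ • f σ)
    (k : Γ → ι → R) (L M : ι) :
    ⁅gaugeGenerator f k L, gaugeGenerator f k M⁆ =
      -∑ σ, (∑ γ, ∑ δ, k γ L * k δ M * C σ γ δ) • f σ := by
  calc ⁅gaugeGenerator f k L, gaugeGenerator f k M⁆
    _ = ∑ γ, ∑ δ, (k γ L * k δ M) • ⁅f γ, f δ⁆ := by
      simp only [gaugeGenerator, sum_lie_sum, smul_lie, lie_smul, smul_smul, mul_comm (k _ M)]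
    _ = -∑ γ, ∑ δ, ∑ σ, (k γ L * k δ M * C σ γ δ) • f σ := by
      simp only [h_comm, smul_neg, sum_neg_distrib, smul_sum, smul_smul]
    _ = -∑ σ, (∑ γ, ∑ δ, k γ L * k δ M * C σ γ δ) • f σ := by
      rw [sum_comm_cycle]
      simp only [sum_smul]

theorem lie_gaugeGenerator_of_quadratic_constraint [Fintype ι]
    (h_comm : ∀ δ γ, ⁅f δ, f γ⁆ = -∑ σ, C σ δ γ • f σ) {k : Γ → ι → R} {t : ι → ι → ι → R}
    (h_quad : ∀ L M σ, ∑ γ, ∑ δ, k γ L * k δ M * C σ γ δ = ∑ J, t J L M * k σ J) (L M : ι) :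
    ⁅gaugeGenerator f k L, gaugeGenerator f k M⁆ = -∑ J, t J L M • gaugeGenerator f k J := by
  rw [lie_gaugeGenerator h_comm]
  simp only [h_quad, gaugeGenerator, smul_sum, sum_smul, smul_smul]
  rw [sum_comm]

end GaugeGenerator

theorem jacobi_of_antisymm_of_commutator_eq {R ι : Type*} [CommRing R] [Fintype ι]
    {X : ι → Matrix ι ι R} (h_anti : ∀ I J K, X K I J = -X J I K)
    (h_comm : ∀ L M, X L * X M - X M * X L = -∑ J, X M J L • X J) (I K L M : ι) :
    ∑ J, (X K I J * X M J L + X L I J * X K J M + X M I J * X L J K) = 0 := by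
  have leibniz : ∑ J, X L I J * X M J K - ∑ J, X M I J * X L J K = -∑ J, X M J L * X J I K := by
    simpa only [Matrix.sub_apply, Matrix.neg_apply, Matrix.mul_apply, Matrix.sum_apply,
      Matrix.smul_apply, smul_eq_mul] using congrFun₂ (h_comm L M) I K
  calc ∑ J, (X K I J * X M J L + X L I J * X K J M + X M I J * X L J K)
    _ = ∑ J, (X M I J * X L J K - X L I J * X M J K - X M J L * X J I K) :=
      sum_congr rfl fun J _ ↦ by rw [h_anti I J K, h_anti J M K]; ring
    _ = 0 := by
      simp only [sum_sub_distrib]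
      linear_combination -leibniz

theorem embedding_tensor_jacobi_general {R Γ ι : Type*} [CommRing R] [Fintype Γ] [Fintype ι]
    (f : Γ → Matrix ι ι R) (C : Γ → Γ → Γ → R)
    (h_comm : ∀ δ γ : Γ, f δ * f γ - f γ * f δ = -∑ σ : Γ, C σ δ γ • f σ)
    (k : Γ → ι → R)
    (h_quad : ∀ (I J : ι) (σ : Γ),
      (∑ γ : Γ, ∑ δ : Γ, k γ I * k δ J * C σ γ δ) -
        (∑ γ : Γ, ∑ K : ι, f γ K I * k γ J * k σ K) = 0)
    (t : ι → ι → ι → R)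
    (ht : ∀ I J K, t I J K = ∑ γ : Γ, f γ I J * k γ K)
    (h_anti : ∀ I J K, t I J K = -t I K J) (I K L M : ι) :
    ∑ J : ι, (t I J K * t J L M + t I J L * t J M K + t I J M * t J K L) = 0 := by
  classical
  let _ : LieRing (Matrix ι ι R) := .ofAssociativeRing
  have t_eq (I J K : ι) : t I J K = gaugeGenerator f k K I J := by
    rw [ht, gaugeGenerator_apply]
  have quadratic (L M : ι) (σ : Γ) :
      ∑ γ, ∑ δ, k γ L * k δ M * C σ γ δ = ∑ J, t J L M * k σ J := by
    rw [sub_eq_zero.mp (h_quad L M σ), sum_comm]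
    simp only [ht, sum_mul]
  have closure (L M : ι) :
      ⁅gaugeGenerator f k L, gaugeGenerator f k M⁆ = -∑ J, t J L M • gaugeGenerator f k J :=
    lie_gaugeGenerator_of_quadratic_constraint h_comm quadratic L M
  simp only [t_eq] at h_anti closure ⊢
  exact jacobi_of_antisymm_of_commutator_eq h_anti closure I K L M

/-- The quadratic embedding-tensor constraint implies the Jacobi identity for
the gauge structure constants `t^I_{JK} = Σ_γ (f_γ)^I_J k^γ_K`. -/
theorem embedding_tensor_jacobi {Γ ι : Type*} [Fintype Γ] [Fintype ι]
    (f : Γ → Matrix ι ι ℝ) (C : Γ → Γ → Γ → ℝ)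
    (h_comm : ∀ δ γ : Γ, f δ * f γ - f γ * f δ = -∑ σ : Γ, C σ δ γ • f σ)
    (k : Γ → ι → ℝ)
    (h_quad : ∀ (I J : ι) (σ : Γ),
      (∑ γ : Γ, ∑ δ : Γ, k γ I * k δ J * C σ γ δ) -
        (∑ γ : Γ, ∑ K : ι, f γ K I * k γ J * k σ K) = 0)
    (t : ι → ι → ι → ℝ)
    (ht : ∀ I J K, t I J K = ∑ γ : Γ, f γ I J * k γ K)
    (h_anti : ∀ I J K, t I J K = -t I K J) :
    ∀ I K L M : ι,
      ∑ J : ι, (t I J K * t J L M + t I J L * t J M K + t I J M * t J K L)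
        = 0 :=
  embedding_tensor_jacobi_general f C h_comm k h_quad t ht h_anti
end

section
/- The two quadratic field-strength invariants in four dimensions are independent: let ι be a finite type and let M, N : ι → ι → ℝ be symmetric (M_{IJ} = M_{JI}, N_{IJ} = N_{JI}). Suppose that for every family F : ι → Matrix (Fin 4) (Fin 4) ℝ of antisymmetric matrices (F^I_{μν} = −F^I_{νμ}) one has Σ_{I,J} Σ_{μ,ν,ρ,σ} M_{IJ} η^{μρ} η^{νσ} F^I_{μν} F^J_{ρσ} + (1/2) Σ_{I,J} Σ_{μ,ν,ρ,σ} N_{IJ} ε^{μνρσ} F^I_{μν} F^J_{ρσ} = 0, where η = diag(−1,1,1,1) and ε is the Levi-Civita symbol on Fin 4 with ε^{0123} = 1. Then M_{IJ} = 0 and N_{IJ} = 0 for all I, J. -/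
open Finset

/-- The Minkowski metric `η = diag(−1,1,1,1)` on `Fin 4`. -/
def minkEta (μ ν : Fin 4) : ℝ :=
  if μ = ν then (if μ = 0 then -1 else 1) else 0

/-- The Levi-Civita symbol on `Fin 4`, normalized by `ε(0,1,2,3) = 1`,
realized as the determinant of the matrix whose rows are the corresponding
standard basis vectors. -/
noncomputable def levCivita (μ ν ρ σ : Fin 4) : ℝ :=
  Matrix.det (Matrix.of fun i j => if ![μ, ν, ρ, σ] i = j then (1 : ℝ) else 0)

/-!
Parametrize a field strength by its electric and magnetic parts `E` and `B`. The two invariants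
polarize to `2 (B ⬝ B' - E ⬝ E')` and `-4 (E ⬝ B' + B ⬝ E')`. Purely magnetic fields annihilate the
second invariant and fields with `E = B` annihilate the first. On fields `x I • u` along a fixed
unit vector `u`, each case leaves a multiple of the quadratic form of `M`, respectively `N`.
-/

open Matrix

theorem eq_zero_of_isSymm_of_forall_sum_eq_zero {ι R : Type*} [Fintype ι] [CommRing R]
    [Invertible (2 : R)] {A : Matrix ι ι R} (hA : A.IsSymm)
    (hself : ∀ x : ι → R, ∑ i, ∑ j, A i j * (x i * x j) = 0) : A = 0 := by
  classical
  by_contra hne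
  obtain ⟨x, hx⟩ : ∃ x, A.toBilin' x x ≠ 0 :=
    LinearMap.BilinForm.exists_bilinForm_self_ne_zero (toBilin'.map_ne_zero_iff.mpr hne)
      ⟨(isSymm_toBilin'_iff_isSymm.mpr hA).eq⟩
  refine hx ?_
  simpa only [toBilin'_apply, mul_left_comm, mul_assoc] using hself x

theorem levCivita_mul_det (μ ν ρ σ : Fin 4) (A : Matrix (Fin 4) (Fin 4) ℝ) :
    levCivita μ ν ρ σ * A.det = (A.submatrix ![μ, ν, ρ, σ] id).det := by
  rw [levCivita, ← det_mul]
  congr 1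
  ext i j
  simp [mul_apply]

theorem det_vandermonde_fin_four {R : Type*} [CommRing R] (a b c d : R) :
    (vandermonde ![a, b, c, d]).det =
      (b - a) * (c - a) * (d - a) * ((c - b) * (d - b)) * (d - c) := by
  simp [det_vandermonde, Fin.prod_univ_succ, Fin.prod_Ioi_succ, mul_assoc]

-- The Vandermonde matrix of `0, 1, 2, 3` has determinant `12`, and selecting its rows
-- `μ, ν, ρ, σ` gives the Vandermonde matrix of `μ, ν, ρ, σ`.
theorem levCivita_eq_prod_sub_div (μ ν ρ σ : Fin 4) :
    levCivita μ ν ρ σ =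
      ((ν - μ) * (ρ - μ) * (σ - μ) * ((ρ - ν) * (σ - ν)) * (σ - ρ) : ℝ) / 12 := by
  have hrows : (vandermonde ![(0 : ℝ), 1, 2, 3]).submatrix ![μ, ν, ρ, σ] id =
      vandermonde ![(μ : ℝ), ν, ρ, σ] := by
    have hcast (i : Fin 4) : ![(0 : ℝ), 1, 2, 3] i = i := by fin_cases i <;> simp
    ext i k
    fin_cases i <;> simp [vandermonde_apply, hcast]
  have hdet : (vandermonde ![(0 : ℝ), 1, 2, 3]).det = 12 := by
    norm_num [det_vandermonde_fin_four]
  rw [eq_div_iff (by norm_num), ← hdet, levCivita_mul_det, hrows, det_vandermonde_fin_four]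

/-- The polarized Maxwell invariant `F_{μν} G^{μν}`, multiplying `M_{IJ}` in the identity. -/
def minkContraction (F G : Matrix (Fin 4) (Fin 4) ℝ) : ℝ :=
  ∑ μ, ∑ ν, ∑ ρ, ∑ σ, minkEta μ ρ * minkEta ν σ * F μ ν * G ρ σ

/-- The polarized topological invariant `ε^{μνρσ} F_{μν} G_{ρσ}`; half of it multiplies `N_{IJ}`
in the identity. -/
noncomputable def levCivitaContraction (F G : Matrix (Fin 4) (Fin 4) ℝ) : ℝ :=
  ∑ μ, ∑ ν, ∑ ρ, ∑ σ, levCivita μ ν ρ σ * F μ ν * G ρ σ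

/-- The field strength `F_{μν}` with electric part `F_{i0} = E_i` and magnetic part
`F_{ij} = ε_{ijk} B_k`, in which both invariants become dot products. The spatial components
`1, 2, 3` of `E` and `B` are stored at the indices `0, 1, 2` of `Fin 3`. -/
def fieldStrength (E B : Fin 3 → ℝ) : Matrix (Fin 4) (Fin 4) ℝ :=
  !![0, -E 0, -E 1, -E 2;
     E 0, 0, B 2, -B 1;
     E 1, -B 2, 0, B 0;
     E 2, B 1, -B 0, 0]

theorem transpose_fieldStrength (E B : Fin 3 → ℝ) :
    (fieldStrength E B)ᵀ = -fieldStrength E B := by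
  ext i j
  fin_cases i <;> fin_cases j <;> simp [fieldStrength]

theorem minkContraction_fieldStrength (E B E' B' : Fin 3 → ℝ) :
    minkContraction (fieldStrength E B) (fieldStrength E' B') = 2 * (B ⬝ᵥ B' - E ⬝ᵥ E') := by
  simp only [minkContraction, minkEta, fieldStrength, Fin.sum_univ_four, vec3_dotProduct, of_apply,
    cons_val', Matrix.cons_val, Fin.reduceEq, if_true, if_false, cons_val_fin_one]
  ring

theorem levCivitaContraction_fieldStrength (E B E' B' : Fin 3 → ℝ) :
    levCivitaContraction (fieldStrength E B) (fieldStrength E' B') =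
      -4 * (E ⬝ᵥ B' + B ⬝ᵥ E') := by
  simp only [levCivitaContraction, levCivita_eq_prod_sub_div, fieldStrength, Fin.sum_univ_four,
    vec3_dotProduct, of_apply, cons_val', Matrix.cons_val, cons_val_fin_one, Fin.coe_ofNat_eq_mod,
    Nat.reduceMod, Nat.cast_zero, Nat.cast_one, Nat.cast_ofNat]
  ring

/-- Independence of the two quadratic field-strength invariants in four
dimensions: if symmetric coefficient matrices `M`, `N` satisfy
`Σ M_{IJ} η^{μρ} η^{νσ} F^I_{μν} F^J_{ρσ}
  + (1/2) Σ N_{IJ} ε^{μνρσ} F^I_{μν} F^J_{ρσ} = 0`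
for every family of antisymmetric field strengths `F`, then `M = 0 = N`. -/
theorem quadratic_invariants_independent {ι : Type*} [Fintype ι]
    (M N : ι → ι → ℝ)
    (hM : ∀ I J, M I J = M J I) (hN : ∀ I J, N I J = N J I)
    (h : ∀ F : ι → Matrix (Fin 4) (Fin 4) ℝ,
      (∀ I, Matrix.transpose (F I) = -(F I)) →
      (∑ I, ∑ J, ∑ μ, ∑ ν, ∑ ρ, ∑ σ,
          M I J * minkEta μ ρ * minkEta ν σ * F I μ ν * F J ρ σ) +
        (1 / 2) * (∑ I, ∑ J, ∑ μ, ∑ ν, ∑ ρ, ∑ σ,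
          N I J * levCivita μ ν ρ σ * F I μ ν * F J ρ σ) = 0) :
    (∀ I J, M I J = 0) ∧ (∀ I J, N I J = 0) := by
  have hMN (E B : ι → Fin 3 → ℝ) :
      ∑ I, ∑ J, M I J * (B I ⬝ᵥ B J - E I ⬝ᵥ E J) =
        ∑ I, ∑ J, N I J * (E I ⬝ᵥ B J + B I ⬝ᵥ E J) := by
    have hF : ∑ I, ∑ J, M I J * minkContraction (fieldStrength (E I) (B I))
          (fieldStrength (E J) (B J)) + 1 / 2 * ∑ I, ∑ J, N I J * levCivitaContraction
          (fieldStrength (E I) (B I)) (fieldStrength (E J) (B J)) = 0 := by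
      simpa only [minkContraction, levCivitaContraction, mul_sum, mul_assoc] using
        h (fun I => fieldStrength (E I) (B I)) fun I => transpose_fieldStrength (E I) (B I)
    simp only [minkContraction_fieldStrength, levCivitaContraction_fieldStrength,
      mul_left_comm (M _ _), mul_left_comm (N _ _), ← mul_sum] at hF
    linarith
  have hxy (x y : ι → ℝ) : ∑ I, ∑ J, M I J * (y I * y J - x I * x J) =
      ∑ I, ∑ J, N I J * (x I * y J + y I * x J) := by
    simpa [vec3_dotProduct] using hMN (fun I => Pi.single 0 (x I)) (fun I => Pi.single 0 (y I))
  have hM0 : of M = 0 := eq_zero_of_isSymm_of_forall_sum_eq_zero (.ext fun I J => hM J I)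
    fun x => by simpa using hxy 0 x
  have hN0 : of N = 0 := eq_zero_of_isSymm_of_forall_sum_eq_zero (.ext fun I J => hN J I)
    fun x => by simpa [← two_mul, mul_left_comm (N _ _), ← mul_sum] using (hxy x x).symm
  exact ⟨congr_fun₂ hM0, congr_fun₂ hN0⟩
end
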